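/- arXiv:1405.3194 — 2 statements merged into one kernel-verified Lean document; each statement's English description precedes it below -/
import Mathlib

section
/- For every positive integer k, ∑_{n=1}^{k} sin(π (2n-1)² / (4k)) = ∑_{n=1}^{k} cos(π (2n-1)² / (4k)) = -√(2k) * ((-1)^k - 1)/4; that is, both sums vanish for even k and both equal √(2k)/2 for odd k. -/
open Finset Real

/-!
For odd `k` the value of the Gauss sum `∑ exp (π i (n + 1/2)² / k)` is read off from the
behaviour of the theta series `∑ exp (π i (n + 1/2)² τ)` as `τ = 1 / k + i t` tends to the cusp
`1 / k`. Splitting the series into residue classes modulo `k` shows that it is asymptotic to the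
Gauss sum divided by `k √t`. On the other hand, because `k + 1` is even, the series equals
`(1 - k τ) ^ (-1/2) θ(τ / (1 - k τ))`; here `1 - k τ = -i k t`, the argument of `θ` tends to
`i ∞`, and `θ(i ∞) = 1`. For even `k` the reflection `n ↦ k - 1 - n` changes the sign of each
term.
-/

section ThetaTransformation

open Complex (I)
open scoped Complex

lemma mul_cpow_of_arg_add_mem_Ioc {z w : ℂ} (hz : z ≠ 0) (hw : w ≠ 0)
    (h : z.arg + w.arg ∈ Set.Ioc (-π) π) (s : ℂ) : (z * w) ^ s = z ^ s * w ^ s := by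
  rw [Complex.cpow_def_of_ne_zero (mul_ne_zero hz hw), Complex.cpow_def_of_ne_zero hz,
    Complex.cpow_def_of_ne_zero hw, (Complex.log_mul_eq_add_log_iff hz hw).mpr h, add_mul,
    Complex.exp_add]

lemma mul_cpow_of_re_pos {z w : ℂ} (hz : 0 < z.re) (hw : 0 < w.re) (s : ℂ) :
    (z * w) ^ s = z ^ s * w ^ s := by
  have hz_arg := abs_lt.mp (Complex.abs_arg_lt_pi_div_two_iff.mpr (.inl hz))
  have hw_arg := abs_lt.mp (Complex.abs_arg_lt_pi_div_two_iff.mpr (.inl hw))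
  refine mul_cpow_of_arg_add_mem_Ioc ?_ ?_ ⟨by linarith, by linarith⟩ s
  · exact fun h ↦ hz.ne' (by simp [h])
  · exact fun h ↦ hw.ne' (by simp [h])

lemma cexp_pi_mul_I_mul_of_even {m : ℤ} (hm : Even m) : cexp (π * I * m) = 1 := by
  obtain ⟨q, rfl⟩ := hm
  exact Complex.exp_eq_one_iff.mpr ⟨q, by push_cast; ring⟩

lemma hasSum_cexp_add_sq (α : ℂ) {τ : ℂ} (hτ : 0 < τ.im) :
    HasSum (fun n : ℤ ↦ cexp (π * I * (n + α) ^ 2 * τ))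
      (1 / (-I * τ) ^ (1 / 2 : ℂ) * jacobiTheta₂ α (-1 / τ)) := by
  have hτ_ne : τ ≠ 0 := fun h ↦ hτ.ne' (by simp [h])
  have hsum := (hasSum_jacobiTheta₂_term (α * τ) hτ).mul_left (cexp (π * I * α ^ 2 * τ))
  rw [jacobiTheta₂_functional_equation, mul_div_cancel_right₀ _ hτ_ne] at hsum
  have hcancel : cexp (π * I * α ^ 2 * τ) * cexp (-π * I * (α * τ) ^ 2 / τ) = 1 := by
    rw [← Complex.exp_add, Complex.exp_eq_one_iff]
    exact ⟨0, by field_simp; ring⟩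
  convert! hsum using 1
  · ext n
    rw [jacobiTheta₂_term, ← Complex.exp_add]
    ring_nf
  · linear_combination
      -(1 / (-I * τ) ^ (1 / 2 : ℂ) * jacobiTheta₂ α (-1 / τ)) * hcancel

lemma jacobiTheta₂_half_sub_intCast {k b : ℤ} (hkb : Even (k + b)) (τ : ℂ) :
    jacobiTheta₂ (b / 2) (τ - k) = jacobiTheta τ := by
  rw [jacobiTheta_eq_jacobiTheta₂]
  refine tsum_congr fun n ↦ ?_
  have heven : Even (n * b - k * n ^ 2) := by
    rw [Int.even_add] at hkb
    rw [Int.even_sub, Int.even_mul, Int.even_mul, Int.even_pow' two_ne_zero, hkb]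
    exact or_comm
  calc jacobiTheta₂_term n (b / 2) (τ - k)
      = cexp (π * I * (n * b - k * n ^ 2 : ℤ)) * jacobiTheta₂_term n 0 τ := by
        rw [jacobiTheta₂_term, jacobiTheta₂_term, ← Complex.exp_add]
        push_cast
        ring_nf
    _ = jacobiTheta₂_term n 0 τ := by rw [cexp_pi_mul_I_mul_of_even heven, one_mul]

lemma jacobiTheta_functional_equation (τ : ℂ) :
    jacobiTheta τ = 1 / (-I * τ) ^ (1 / 2 : ℂ) * jacobiTheta (-1 / τ) := by
  simp [jacobiTheta_eq_jacobiTheta₂, jacobiTheta₂_functional_equation 0 τ]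

lemma hasSum_cexp_add_half_sq {k b : ℤ} (hkb : Even (k + b)) {τ : ℂ} (hτ : 0 < τ.im) :
    HasSum (fun n : ℤ ↦ cexp (π * I * (n + b / 2) ^ 2 * τ))
      (1 / (1 - k * τ) ^ (1 / 2 : ℂ) * jacobiTheta (τ / (1 - k * τ))) := by
  have hτ_ne : τ ≠ 0 := fun h ↦ hτ.ne' (by simp [h])
  have hσ_im : 0 < (k - 1 / τ).im := by
    simpa [Complex.inv_im, neg_div] using div_pos hτ (Complex.normSq_pos.mpr hτ_ne)
  have hsqrt : (1 - k * τ) ^ (1 / 2 : ℂ) =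
      (-I * τ) ^ (1 / 2 : ℂ) * (-I * (k - 1 / τ)) ^ (1 / 2 : ℂ) := by
    rw [← mul_cpow_of_re_pos (by simpa using hτ) (by simpa using hσ_im)]
    congr 1
    field_simp
    linear_combination (1 - k * τ) * Complex.I_sq
  have hinv : -1 / (k - 1 / τ) = τ / (1 - k * τ) := by
    rw [← neg_sub (k * τ), div_neg, neg_div, one_div, sub_div' hτ_ne]
    simp
  have htheta : jacobiTheta₂ (b / 2) (-1 / τ) = jacobiTheta (k - 1 / τ) := by
    rw [← jacobiTheta₂_half_sub_intCast hkb]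
    ring_nf
  convert! hasSum_cexp_add_sq (b / 2) hτ using 1
  rw [htheta, jacobiTheta_functional_equation (k - 1 / τ), hinv, hsqrt]
  ring

end ThetaTransformation

section Asymptotics

open Filter Topology HurwitzZeta
open Complex (I)
open scoped Complex

lemma tendsto_jacobiTheta_comap_im_atTop :
    Tendsto jacobiTheta (comap Complex.im atTop) (𝓝 1) := by
  have hexp : Tendsto (fun τ : ℂ ↦ rexp (-π * τ.im)) (comap Complex.im atTop) (𝓝 0) :=
    tendsto_exp_atBot.comp
      (tendsto_comap.const_mul_atTop_of_neg (neg_neg_iff_pos.mpr pi_pos))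
  exact tendsto_sub_nhds_zero_iff.mp
    (isBigO_at_im_infty_jacobiTheta_sub_one.trans_tendsto hexp)

lemma tendsto_cosKernel_atTop (a : UnitAddCircle) : Tendsto (cosKernel a) atTop (𝓝 1) := by
  obtain ⟨p, hp, hbound⟩ := isBigO_atTop_cosKernel_sub a
  have hexp : Tendsto (fun x ↦ rexp (-p * x)) atTop (𝓝 0) :=
    tendsto_exp_atBot.comp (tendsto_id.const_mul_atTop_of_neg (neg_neg_iff_pos.mpr hp))
  exact tendsto_sub_nhds_zero_iff.mp (hbound.trans_tendsto hexp)

lemma tendsto_sqrt_mul_evenKernel (a : UnitAddCircle) :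
    Tendsto (fun x ↦ √x * evenKernel a x) (𝓝[>] 0) (𝓝 1) := by
  refine ((tendsto_cosKernel_atTop a).comp tendsto_inv_nhdsGT_zero).congr' ?_
  filter_upwards [self_mem_nhdsWithin] with x hx
  have hsqrt : √x ≠ 0 := (sqrt_pos.mpr hx).ne'
  rw [evenKernel_functional_equation, ← sqrt_eq_rpow, Function.comp_apply, one_div x]
  field_simp

lemma hasSum_int_of_residues {E : Type*} [AddCommMonoid E] [TopologicalSpace E] [ContinuousAdd E]
    {k : ℕ} [NeZero k] {f : ℤ → E} {g : Fin k → E}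
    (h : ∀ r : Fin k, HasSum (fun m : ℤ ↦ f (m * k + r)) (g r)) : HasSum f (∑ r, g r) := by
  rw [← (Int.divModEquiv k).symm.hasSum_iff]
  have hclass (r : Fin k) : HasSum
      (fun p : ℤ × Fin k ↦ if p.2 = r then f (p.1 * k + p.2) else 0) (g r) := by
    refine ((Prod.mk_left_injective r).hasSum_iff ?_).mp (by simpa [Function.comp_def] using h r)
    rintro ⟨m, s⟩ hs
    exact if_neg fun hsr ↦ hs ⟨m, by rw [← hsr]⟩
  simpa [Function.comp_def] using hasSum_sum fun r (_ : r ∈ univ) ↦ hclass r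

lemma hasSum_periodic_mul_gaussian {k : ℕ} [NeZero k] {w : ℤ → ℂ} (hw : Function.Periodic w k)
    (α : ℝ) {t : ℝ} (ht : 0 < t) :
    HasSum (fun n : ℤ ↦ w n * rexp (-π * (n + α) ^ 2 * t))
      (∑ r : Fin k, w r * evenKernel ((r + α) / k : ℝ) (k ^ 2 * t)) := by
  have hk : (k : ℝ) ≠ 0 := NeZero.ne _
  refine hasSum_int_of_residues fun r ↦ ?_
  have hkernel := hasSum_int_evenKernel ((r + α) / k) (t := k ^ 2 * t) (by positivity)
  refine ((Complex.hasSum_ofReal.mpr hkernel).mul_left (w r)).congr_fun fun m ↦ ?_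
  have hperiod : w (m * k + r) = w r := by simpa [add_comm] using hw.int_mul m r
  rw [hperiod]
  congr 3
  push_cast
  field_simp
  ring

lemma tendsto_sqrt_mul_tsum_periodic_mul_gaussian {k : ℕ} [NeZero k] {w : ℤ → ℂ}
    (hw : Function.Periodic w k) (α : ℝ) :
    Tendsto (fun t : ℝ ↦ √t * ∑' n : ℤ, w n * rexp (-π * (n + α) ^ 2 * t)) (𝓝[>] 0)
      (𝓝 ((∑ n ∈ range k, w n) / k)) := by
  have hk : (0 : ℝ) < k := Nat.cast_pos.mpr (NeZero.pos k)
  have hscale : Tendsto (fun t : ℝ ↦ (k : ℝ) ^ 2 * t) (𝓝[>] 0) (𝓝[>] (0 : ℝ)) := by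
    refine tendsto_nhdsWithin_iff.mpr ⟨?_, ?_⟩
    · exact (Continuous.tendsto' (by fun_prop) 0 0 (by simp)).mono_left nhdsWithin_le_nhds
    · filter_upwards [self_mem_nhdsWithin] with t ht using mul_pos (pow_pos hk 2) ht
  have hterm (r : Fin k) := (Complex.continuous_ofReal.tendsto 1).comp
    ((tendsto_sqrt_mul_evenKernel ((r + α) / k : ℝ)).comp hscale)
  have hlim := (tendsto_finsetSum univ fun r _ ↦ (hterm r).const_mul (w r)).div_const (k : ℂ)
  simp only [Complex.ofReal_one, mul_one, ← sum_range fun n ↦ w n] at hlim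
  refine hlim.congr' ?_
  filter_upwards [self_mem_nhdsWithin] with t ht
  rw [(hasSum_periodic_mul_gaussian hw α ht).tsum_eq, mul_sum, sum_div]
  refine sum_congr rfl fun r _ ↦ ?_
  have hsqrt : √((k : ℝ) ^ 2 * t) = k * √t := by
    rw [sqrt_mul (by positivity), sqrt_sq hk.le]
  have hkC : (k : ℂ) ≠ 0 := NeZero.ne _
  simp only [Function.comp_apply, hsqrt]
  push_cast
  field_simp

lemma neg_I_mul_ofReal_cpow_half {x : ℝ} (hx : 0 < x) :
    (-I * x) ^ (1 / 2 : ℂ) = √x / cexp (π / 4 * I) := by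
  have hI : (-I) ^ (1 / 2 : ℂ) = 1 / cexp (π / 4 * I) := by
    rw [Complex.cpow_def_of_ne_zero (neg_ne_zero.mpr Complex.I_ne_zero), Complex.log_neg_I,
      one_div (cexp _), ← Complex.exp_neg]
    ring_nf
  have harg : (-I).arg + (x : ℂ).arg ∈ Set.Ioc (-π) π := by
    rw [Complex.arg_neg_I, Complex.arg_ofReal_of_nonneg hx.le]
    constructor <;> linarith [pi_pos]
  rw [mul_cpow_of_arg_add_mem_Ioc (neg_ne_zero.mpr Complex.I_ne_zero) (mod_cast hx.ne') harg, hI,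
    sqrt_eq_rpow, Complex.ofReal_cpow hx.le]
  push_cast
  ring

lemma tendsto_sqrt_mul_tsum_cexp_add_half_sq {k : ℕ} [NeZero k] {b : ℤ} (hkb : Even (k + b)) :
    Tendsto (fun t : ℝ ↦ √t * ∑' n : ℤ, cexp (π * I * (n + b / 2) ^ 2 * (1 / k + I * t)))
      (𝓝[>] 0) (𝓝 (cexp (π / 4 * I) / √k)) := by
  have hk : (0 : ℝ) < k := Nat.cast_pos.mpr (NeZero.pos k)
  have hkC : (k : ℂ) ≠ 0 := NeZero.ne _
  have hcusp : Tendsto (fun t : ℝ ↦ (-1 / k : ℝ) + (((k : ℝ) ^ 2 * t)⁻¹ : ℝ) * I) (𝓝[>] 0)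
      (comap Complex.im atTop) := by
    refine tendsto_comap_iff.mpr ?_
    simpa only [Function.comp_def, mul_inv_rev, Complex.add_im, Complex.ofReal_im,
      Complex.im_ofReal_mul, Complex.I_im, mul_one, zero_add] using
      tendsto_inv_nhdsGT_zero.atTop_mul_const (inv_pos.mpr (pow_pos hk 2))
  have hlim := (tendsto_jacobiTheta_comap_im_atTop.comp hcusp).const_mul (cexp (π / 4 * I) / √k)
  rw [mul_one] at hlim
  refine hlim.congr' ?_
  filter_upwards [self_mem_nhdsWithin] with t (ht : 0 < t)
  set τ : ℂ := 1 / k + I * t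
  have hτ_im : 0 < τ.im := by simpa [τ, Complex.inv_im] using ht
  have hdenom : 1 - (k : ℤ) * τ = -I * (k * t : ℝ) := by
    simp only [τ]
    push_cast
    field_simp
    ring
  have harg : τ / (-I * (k * t : ℝ)) = (-1 / k : ℝ) + (((k : ℝ) ^ 2 * t)⁻¹ : ℝ) * I := by
    have htC : (t : ℂ) ≠ 0 := mod_cast ht.ne'
    simp only [τ]
    push_cast
    field_simp
    linear_combination -Complex.I_sq
  have hsqrt_t : (√t : ℂ) ≠ 0 := mod_cast (sqrt_pos.mpr ht).ne'
  rw [(hasSum_cexp_add_half_sq hkb hτ_im).tsum_eq, hdenom, harg,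
    neg_I_mul_ofReal_cpow_half (mul_pos hk ht), sqrt_mul hk.le, Function.comp_apply]
  push_cast
  field_simp

end Asymptotics

section GaussSum

open Complex (I)
open scoped Complex

lemma periodic_cexp_add_half_sq {k : ℕ} [NeZero k] {b : ℤ} (hkb : Even (k + b)) :
    Function.Periodic (fun n : ℤ ↦ cexp (π * I * (n + b / 2) ^ 2 / k)) k := by
  intro n
  have hk : (k : ℂ) ≠ 0 := NeZero.ne _
  have heven : Even (2 * n + (k + b)) := (even_two_mul n).add hkb
  calc cexp (π * I * ((n + k : ℤ) + b / 2) ^ 2 / k)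
      = cexp (π * I * (n + b / 2) ^ 2 / k) * cexp (π * I * (2 * n + (k + b) : ℤ)) := by
        rw [← Complex.exp_add]
        congr 1
        push_cast
        field_simp
        ring
    _ = cexp (π * I * (n + b / 2) ^ 2 / k) := by rw [cexp_pi_mul_I_mul_of_even heven, mul_one]

theorem sum_range_cexp_add_half_sq {k : ℕ} [NeZero k] {b : ℤ} (hkb : Even (k + b)) :
    ∑ n ∈ range k, cexp (π * I * (n + b / 2) ^ 2 / k) = √k * cexp (π / 4 * I) := by
  have hk : (k : ℂ) ≠ 0 := NeZero.ne _
  have hsplit (n : ℤ) (t : ℝ) : cexp (π * I * (n + b / 2) ^ 2 * (1 / k + I * t)) =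
      cexp (π * I * (n + b / 2) ^ 2 / k) * rexp (-π * (n + (b / 2 : ℝ)) ^ 2 * t) := by
    push_cast
    rw [← Complex.exp_add]
    congr 1
    linear_combination π * (n + b / 2) ^ 2 * t * Complex.I_sq
  have htheta := tendsto_sqrt_mul_tsum_cexp_add_half_sq hkb
  simp only [hsplit] at htheta
  have hvalue := tendsto_nhds_unique
    (tendsto_sqrt_mul_tsum_periodic_mul_gaussian (periodic_cexp_add_half_sq hkb) (b / 2)) htheta
  have hsqrt : (√k : ℂ) * √k = k := mod_cast mul_self_sqrt k.cast_nonneg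
  have hsqrt_ne : (√k : ℂ) ≠ 0 := left_ne_zero_of_mul (hsqrt ▸ hk)
  simp only [Int.cast_natCast] at hvalue
  rw [(div_eq_iff hk).mp hvalue, ← hsqrt]
  field_simp

lemma sum_range_cexp_add_half_sq_of_even {k : ℕ} (hk : Even k) :
    ∑ n ∈ range k, cexp (π * I * (n + 1 / 2) ^ 2 / k) = 0 := by
  refine self_eq_neg.mp ?_
  rw [← sum_neg_distrib, ← sum_range_reflect]
  refine sum_congr rfl fun n hn ↦ ?_
  have hnk : n + 1 ≤ k := mem_range.mp hn
  have hk_ne : (k : ℂ) ≠ 0 := by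
    norm_cast
    omega
  have heven : Even ((k : ℤ) - 2 * (n + 1)) := ((Int.even_coe_nat k).mpr hk).sub (even_two_mul _)
  calc cexp (π * I * ((k - 1 - n : ℕ) + 1 / 2) ^ 2 / k)
      = cexp (π * I * (n + 1 / 2) ^ 2 / k) * cexp (π * I) *
          cexp (π * I * (k - 2 * (n + 1) : ℤ)) := by
        rw [← Complex.exp_add, ← Complex.exp_add, Nat.sub_sub, add_comm 1 n, Nat.cast_sub hnk]
        congr 1
        push_cast
        field_simp
        ring
    _ = -cexp (π * I * (n + 1 / 2) ^ 2 / k) := by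
        rw [cexp_pi_mul_I_mul_of_even heven, Complex.exp_pi_mul_I, mul_one, mul_neg_one]

lemma sqrt_mul_cexp_pi_div_four_mul_I (x : ℝ) :
    √x * cexp (π / 4 * I) = (√(2 * x) / 2 : ℝ) * (1 + I) := by
  have hexp : cexp (π / 4 * I) = (√2 / 2 : ℝ) * (1 + I) := by
    have hcos_sin := Complex.exp_ofReal_mul_I (π / 4)
    rw [cos_pi_div_four, sin_pi_div_four] at hcos_sin
    push_cast at hcos_sin ⊢
    rw [hcos_sin]
    ring
  rw [hexp, sqrt_mul zero_le_two]
  push_cast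
  ring

lemma sum_Icc_cexp_odd_sq (k : ℕ) [NeZero k] :
    ∑ n ∈ Icc 1 k, cexp ((π * (2 * n - 1) ^ 2 / (4 * k) : ℝ) * I) =
      (-√(2 * k) * ((-1) ^ k - 1) / 4 : ℝ) * (1 + I) := by
  have hshift : ∑ n ∈ Icc 1 k, cexp ((π * (2 * n - 1) ^ 2 / (4 * k) : ℝ) * I) =
      ∑ n ∈ range k, cexp (π * I * (n + 1 / 2) ^ 2 / k) := by
    rw [← Ico_add_one_right_eq_Icc, sum_Ico_eq_sum_range, Nat.add_sub_cancel]
    refine sum_congr rfl fun n _ ↦ congrArg cexp ?_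
    push_cast
    ring
  rw [hshift]
  rcases k.even_or_odd with hk | hk
  · rw [sum_range_cexp_add_half_sq_of_even hk, hk.neg_one_pow]
    simp
  · have hkb : Even ((k : ℤ) + 1) := mod_cast hk.add_one
    have hgauss := sum_range_cexp_add_half_sq hkb
    rw [Int.cast_one] at hgauss
    rw [hgauss, sqrt_mul_cexp_pi_div_four_mul_I, hk.neg_one_pow]
    push_cast
    ring

end GaussSum

theorem odd_indexed_quadratic_sums (k : ℕ) (hk : 0 < k) :
    (∑ n ∈ Finset.Icc 1 k, Real.sin (π * (2 * (n : ℝ) - 1) ^ 2 / (4 * k)) =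
        -Real.sqrt (2 * (k : ℝ)) * ((-1 : ℝ) ^ k - 1) / 4) ∧
    (∑ n ∈ Finset.Icc 1 k, Real.cos (π * (2 * (n : ℝ) - 1) ^ 2 / (4 * k)) =
        -Real.sqrt (2 * (k : ℝ)) * ((-1 : ℝ) ^ k - 1) / 4) := by
  have : NeZero k := ⟨hk.ne'⟩
  have hsum := sum_Icc_cexp_odd_sq k
  constructor
  · simpa only [Complex.im_sum, Complex.exp_ofReal_mul_I_im, Complex.im_ofReal_mul,
      Complex.add_im, Complex.one_im, Complex.I_im, zero_add, mul_one]
      using congrArg Complex.im hsum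
  · simpa only [Complex.re_sum, Complex.exp_ofReal_mul_I_re, Complex.re_ofReal_mul,
      Complex.add_re, Complex.one_re, Complex.I_re, add_zero, mul_one]
      using congrArg Complex.re hsum
end

section
/- For all positive integers k and p, ∑_{n=1}^{2p(2k-1)} (-1)^n * sin(π n² / (2(2k-1))) = (-1)^k * p * √(2k-1). -/
open Finset Real

/-!
The sum over one period is the imaginary part of a shifted quadratic Gauss sum, so everything rests
on the Landsberg–Schaar reciprocity law
`∑_{r < b} exp(π i a r² / b) = √(b / a) exp(π i / 4) ∑_{r < a} exp(-π i b r² / a)` for even `a * b`,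
which is used for `a = 1`. The reciprocity law compares the growth of the Jacobi theta function
`θ(τ)` near the cusps `a / b` and `-b / a`, which are exchanged by `τ ↦ -1 / τ`: splitting the theta
series into residue classes modulo `N` shows that the leading coefficient of `θ` at `a / N` is the
Gauss sum with numerator `a` and denominator `N`.
-/

section PeriodicSums

variable {M : Type*} [AddCommMonoid M] {f : ℕ → M} {N : ℕ}

lemma sum_Ico_add_eq_sum_range_of_periodic (hf : Function.Periodic f N) (m : ℕ) :
    ∑ n ∈ Ico m (m + N), f n = ∑ n ∈ range N, f n := by
  calc ∑ n ∈ Ico m (m + N), f n = ∑ n ∈ Ico m (m + N), f (n % N) :=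
        sum_congr rfl fun n _ ↦ (hf.map_mod_nat n).symm
    _ = (((Multiset.Ico m (m + N)).map (· % N)).map f).sum := by
        rw [Multiset.map_map]; rfl
    _ = ∑ n ∈ range N, f n := by
        rw [Nat.multiset_Ico_map_mod]; rfl

lemma sum_range_add_eq_sum_range_of_periodic (hf : Function.Periodic f N) (m : ℕ) :
    ∑ n ∈ range N, f (n + m) = ∑ n ∈ range N, f n := by
  rw [← sum_Ico_add_eq_sum_range_of_periodic hf m, sum_Ico_eq_sum_range, add_tsub_cancel_left]
  simp only [add_comm m]

lemma sum_range_mul_of_periodic (hf : Function.Periodic f N) (p : ℕ) :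
    ∑ n ∈ range (p * N), f n = p • ∑ n ∈ range N, f n := by
  induction p with
  | zero => simp
  | succ p ih =>
    rw [add_one_mul, sum_range_add, ih, succ_nsmul]
    congr 1
    exact sum_congr rfl fun n _ ↦ by rw [add_comm]; exact hf.nsmul p n

lemma sum_Icc_one_mul_of_periodic (hf : Function.Periodic f N) (p : ℕ) :
    ∑ n ∈ Icc 1 (p * N), f n = p • ∑ n ∈ range N, f n := by
  rw [← Ico_add_one_right_eq_Icc, add_comm,
    sum_Ico_add_eq_sum_range_of_periodic (N := p * N) (hf.nsmul p), sum_range_mul_of_periodic hf]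

end PeriodicSums

section GaussSums

open Complex Filter Topology

lemma ofReal_mul_cpow {x : ℝ} (hx : 0 < x) (z s : ℂ) : (x * z : ℂ) ^ s = (x : ℂ) ^ s * z ^ s := by
  have hx' : (x : ℂ) ≠ 0 := by exact_mod_cast hx.ne'
  rcases eq_or_ne z 0 with rfl | hz
  · rcases eq_or_ne s 0 with rfl | hs <;> simp [*]
  · rw [cpow_def_of_ne_zero (mul_ne_zero hx' hz), cpow_def_of_ne_zero hx', cpow_def_of_ne_zero hz,
      log_ofReal_mul hx hz, ofReal_log hx.le, add_mul, Complex.exp_add]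

lemma one_div_neg_I_mul_cpow_half {t : ℝ} (ht : 0 < t) :
    1 / (-I * t : ℂ) ^ (1 / 2 : ℂ) = √t⁻¹ * cexp (π / 4 * I) := by
  have hsqrt : (t : ℂ) ^ (1 / 2 : ℂ) = √t := by
    rw [Real.sqrt_eq_rpow, ofReal_cpow ht.le]; norm_num
  have hI : (-I) ^ (1 / 2 : ℂ) = (cexp (π / 4 * I))⁻¹ := by
    rw [cpow_def_of_ne_zero (by simp), log_neg_I, ← Complex.exp_neg]
    ring_nf
  rw [mul_comm, ofReal_mul_cpow ht, hsqrt, hI, Real.sqrt_inv, ofReal_inv, one_div, mul_inv,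
    inv_inv]

lemma jacobiTheta₂_add_intCast_add_even (z τ : ℂ) (m : ℤ) {n : ℤ} (hn : Even n) :
    jacobiTheta₂ (z + m) (τ + n) = jacobiTheta₂ z τ := by
  have hz : Function.Periodic (jacobiTheta₂ · (τ + n)) 1 := (jacobiTheta₂_add_left · _)
  have hτ : Function.Periodic (jacobiTheta₂ z) 2 := jacobiTheta₂_add_right z
  obtain ⟨j, rfl⟩ := even_iff_exists_two_mul.mp hn
  calc jacobiTheta₂ (z + m) (τ + (2 * j : ℤ)) = jacobiTheta₂ z (τ + (2 * j : ℤ)) := by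
        simpa using hz.int_mul m z
    _ = jacobiTheta₂ z τ := by simpa [mul_comm] using hτ.int_mul j τ

lemma tendsto_jacobiTheta₂_comap_im_atTop (z : ℂ) :
    Tendsto (jacobiTheta₂ z) (comap im atTop) (𝓝 1) := by
  have hterm (n : ℤ) : Tendsto (jacobiTheta₂_term n z) (comap im atTop)
      (𝓝 (if n = 0 then 1 else 0)) := by
    split_ifs with hn
    · exact tendsto_const_nhds.congr fun τ ↦ by simp [hn, jacobiTheta₂_term]
    · have hneg : -π * (n : ℝ) ^ 2 < 0 := by
        have := pi_pos
        have : (0 : ℝ) < (n : ℝ) ^ 2 := by positivity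
        nlinarith
      rw [tendsto_zero_iff_norm_tendsto_zero]
      simp only [norm_jacobiTheta₂_term, sub_eq_add_neg]
      exact Real.tendsto_exp_atBot.comp <| tendsto_atBot_add_const_right _ _ <|
        tendsto_comap.const_mul_atTop_of_neg hneg
  have hbound : ∀ᶠ τ in comap im atTop, ∀ n,
      ‖jacobiTheta₂_term n z τ‖ ≤ ‖jacobiTheta₂_term n z I‖ := by
    filter_upwards [tendsto_comap.eventually_ge_atTop 1] with τ hτ n
    simp only [norm_jacobiTheta₂_term, I_im]
    have := mul_le_mul_of_nonneg_left hτ (by positivity : 0 ≤ π * (n : ℝ) ^ 2)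
    gcongr rexp (?_ - _)
    linarith
  have hsum : Summable fun n ↦ ‖jacobiTheta₂_term n z I‖ :=
    ((summable_jacobiTheta₂_term_iff z I).mpr (by simp)).norm
  have hlim := tendsto_tsum_of_dominated_convergence hsum hterm hbound
  rwa [tsum_ite_eq] at hlim

lemma jacobiTheta₂_eq_sum_range {N : ℕ} (hN : N ≠ 0) (z : ℂ) {τ : ℂ} (hτ : 0 < τ.im) :
    jacobiTheta₂ z τ = ∑ r ∈ range N,
      jacobiTheta₂_term r z τ * jacobiTheta₂ (N * (z + r * τ)) (N ^ 2 * τ) := by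
  have : NeZero N := ⟨hN⟩
  have hτN : 0 < (N ^ 2 * τ : ℂ).im := by
    rw [← ofReal_natCast, ← ofReal_pow, im_ofReal_mul]; positivity
  have hsplit := hasSum_jacobiTheta₂_term z hτ
  rw [← ((Equiv.prodComm _ _).trans (Int.divModEquiv N).symm).hasSum_iff] at hsplit
  have hclass (r : Fin N) : HasSum
      (fun q : ℤ ↦ jacobiTheta₂_term ((Int.divModEquiv N).symm (q, r)) z τ)
      (jacobiTheta₂_term (r : ℕ) z τ * jacobiTheta₂ (N * (z + (r : ℕ) * τ)) (N ^ 2 * τ)) := by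
    refine ((hasSum_jacobiTheta₂_term _ hτN).mul_left _).congr_fun fun q ↦ ?_
    simp only [jacobiTheta₂_term, Int.divModEquiv_symm_apply, ← Complex.exp_add]
    push_cast
    ring_nf
  rw [← (hsplit.prod_fiberwise hclass).tsum_eq, tsum_fintype, ← Fin.sum_univ_eq_sum_range
    fun r : ℕ ↦ jacobiTheta₂_term r z τ * jacobiTheta₂ (N * (z + r * τ)) (N ^ 2 * τ)]

lemma cpow_half_mul_jacobiTheta₂_I_mul (u : ℂ) {x : ℂ} (hx : x ≠ 0) :
    x ^ (1 / 2 : ℂ) * jacobiTheta₂ u (I * x) =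
      cexp (-π * u ^ 2 / x) * jacobiTheta₂ (I * u / x) (I / x) := by
  have hsq : -π * I * u ^ 2 / (I * x) = -π * u ^ 2 / x := by field_simp
  have hz : u / (I * x) = -(I * u / x) := by field_simp; simp
  have hτ : -1 / (I * x) = I / x := by field_simp; simp
  have hxI : -I * (I * x) = x := by rw [← mul_assoc]; simp
  have hx0 : x ^ (1 / 2 : ℂ) ≠ 0 := by simp [cpow_eq_zero_iff, hx]
  rw [jacobiTheta₂_functional_equation u, hsq, hz, hτ, hxI, jacobiTheta₂_neg_left]
  field_simp

/-- The quadratic Gauss sum `∑ exp(π i a r² / N)` over `0 ≤ r < N`. With `π i` in place of the more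
usual `2 π i`, the summand is `N`-periodic in `r` exactly when `a * N` is even. -/
noncomputable def quadraticGaussSum (a : ℤ) (N : ℕ) : ℂ :=
  ∑ r ∈ range N, cexp (π * I * a * r ^ 2 / N)

/-- The quadratic Gauss sum with the `r`-th summand weighted by `θ(r / N, i x)`. This is the exact
value of the theta function near the cusp `a / N`, up to a square root. -/
noncomputable def thetaGaussSum (a : ℤ) (N : ℕ) (x : ℂ) : ℂ :=
  ∑ r ∈ range N, cexp (π * I * a * r ^ 2 / N) * jacobiTheta₂ (r / N) (I * x)

lemma tendsto_thetaGaussSum (a : ℤ) (N : ℕ) :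
    Tendsto (thetaGaussSum a N) (comap re atTop) (𝓝 (quadraticGaussSum a N)) := by
  have hI : Tendsto (I * ·) (comap re atTop) (comap im atTop) := by
    simpa [tendsto_comap_iff, Function.comp_def] using tendsto_comap
  refine tendsto_finsetSum _ fun r _ ↦ ?_
  simpa using ((tendsto_jacobiTheta₂_comap_im_atTop (r / N)).comp hI).const_mul
    (cexp (π * I * a * r ^ 2 / N))

lemma jacobiTheta₂_zero_near_cusp {a : ℤ} {N : ℕ} (hN : N ≠ 0) (haN : Even (a * N)) {x : ℂ}
    (hx : 0 < x.re) :
    jacobiTheta₂ 0 (a / N + I / (N ^ 2 * x)) = x ^ (1 / 2 : ℂ) * thetaGaussSum a N x := by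
  have hx0 : x ≠ 0 := fun h ↦ by simp [h] at hx
  have hN' : (N : ℂ) ≠ 0 := by exact_mod_cast hN
  set τ : ℂ := a / N + I / (N ^ 2 * x) with hτ
  have him : 0 < τ.im := by
    have hsplit : τ = ((a / N : ℝ) : ℂ) + ((1 / N ^ 2 : ℝ) : ℂ) * (I * x⁻¹) := by
      rw [hτ]; push_cast; field_simp
    have : 0 < x⁻¹.re := by rw [inv_re]; exact div_pos hx (normSq_pos.mpr hx0)
    rw [hsplit, add_im, ofReal_im, im_ofReal_mul, I_mul_im, zero_add]
    positivity
  rw [jacobiTheta₂_eq_sum_range hN 0 him, thetaGaussSum, mul_sum]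
  refine sum_congr rfl fun r _ ↦ ?_
  have hterm : jacobiTheta₂_term r 0 τ =
      cexp (π * I * a * r ^ 2 / N) * cexp (-π * (r / N) ^ 2 / x) := by
    rw [jacobiTheta₂_term, ← Complex.exp_add, hτ]
    congr 1
    push_cast
    field_simp
    linear_combination (r ^ 2 : ℂ) * I_sq
  have hfst : (N * (0 + r * τ) : ℂ) = I * (r / N) / x + (r * a : ℤ) := by
    rw [hτ]; push_cast; field_simp; ring
  have hsnd : (N ^ 2 * τ : ℂ) = I / x + (a * N : ℤ) := by
    rw [hτ]; push_cast; field_simp; ring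
  rw [hterm, hfst, hsnd, jacobiTheta₂_add_intCast_add_even _ _ _ haN, mul_assoc,
    ← cpow_half_mul_jacobiTheta₂_I_mul _ hx0]
  ring

lemma thetaGaussSum_reciprocity {a b : ℕ} (ha : a ≠ 0) (hb : b ≠ 0) (hab : Even (a * b)) {x : ℝ}
    (hx : 0 < x) :
    thetaGaussSum a b x = 1 / (-I * (a / b + I / (b ^ 2 * x))) ^ (1 / 2 : ℂ) *
      (1 + I / (a * b * x)) ^ (1 / 2 : ℂ) * thetaGaussSum (-b) a (x + I / (a * b)) := by
  have ha' : (a : ℂ) ≠ 0 := by exact_mod_cast ha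
  have hb' : (b : ℂ) ≠ 0 := by exact_mod_cast hb
  have hx' : (x : ℂ) ≠ 0 := by exact_mod_cast hx.ne'
  set τ : ℂ := a / b + I / (b ^ 2 * x) with hτ
  set y : ℂ := x + I / (a * b) with hy
  have hyre : y.re = x := by simp [hy, ← Nat.cast_mul]
  have hy0 : y ≠ 0 := fun h ↦ hx.ne' (by rw [← hyre, h, zero_re])
  have hinv : -1 / τ = (-b : ℤ) / a + I / (a ^ 2 * y) := by
    have hτy : τ = a * y / (b * x) := by rw [hτ, hy]; field_simp
    have hyx : a * b * y = a * b * x + I := by rw [hy]; field_simp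
    rw [hτy]; push_cast; field_simp; linear_combination hyx
  have hypow : y ^ (1 / 2 : ℂ) = (x : ℂ) ^ (1 / 2 : ℂ) * (1 + I / (a * b * x)) ^ (1 / 2 : ℂ) := by
    rw [← ofReal_mul_cpow hx, hy]; congr 1; field_simp
  have hcusp_b := jacobiTheta₂_zero_near_cusp (a := a) hb (by exact_mod_cast hab)
    (x := x) (by simpa)
  have hcusp_a := jacobiTheta₂_zero_near_cusp (a := -b) ha
    (by rw [neg_mul, even_neg, mul_comm]; exact_mod_cast hab) (hyre ▸ hx)
  rw [Int.cast_natCast, ← hτ, jacobiTheta₂_functional_equation, hinv, zero_div, hcusp_a, hypow]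
    at hcusp_b
  have hx0 : (x : ℂ) ^ (1 / 2 : ℂ) ≠ 0 := by simp [cpow_eq_zero_iff, hx']
  apply mul_left_cancel₀ hx0
  rw [← hcusp_b]
  simp only [zero_pow two_ne_zero, mul_zero, zero_div, Complex.exp_zero]
  ring

theorem quadraticGaussSum_reciprocity {a b : ℕ} (ha : a ≠ 0) (hb : b ≠ 0) (hab : Even (a * b)) :
    quadraticGaussSum a b = √(b / a) * cexp (π / 4 * I) * quadraticGaussSum (-b) a := by
  have hab' : (0 : ℝ) < a / b := by positivity
  have hx : Tendsto ((↑) : ℝ → ℂ) atTop (comap re atTop) := tendsto_comap_iff.mpr tendsto_id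
  have hy : Tendsto (fun x : ℝ ↦ x + I / (a * b)) atTop (comap re atTop) :=
    tendsto_comap_iff.mpr <| tendsto_id.congr fun x ↦ by simp [← Nat.cast_mul]
  have hdiv (c : ℂ) : Tendsto (fun x : ℝ ↦ c / x) atTop (𝓝 0) := by
    simpa [div_eq_mul_inv] using
      (tendsto_inv₀_cobounded.comp (RCLike.tendsto_ofReal_atTop_cobounded ℂ)).const_mul c
  have hτ : Tendsto (fun x : ℝ ↦ (-I * (a / b + I / (b ^ 2 * x))) ^ (1 / 2 : ℂ)) atTop
      (𝓝 ((-I * (a / b : ℝ)) ^ (1 / 2 : ℂ))) := by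
    refine Tendsto.cpow ?_ tendsto_const_nhds (Or.inr ?_)
    · simpa [← div_div] using ((hdiv (I / b ^ 2)).const_add (a / b : ℂ)).const_mul (-I)
    · rw [mul_comm, im_ofReal_mul, neg_im, I_im, mul_neg_one]
      exact (neg_neg_of_pos hab').ne
  have hone : Tendsto (fun x : ℝ ↦ (1 + I / (a * b * x)) ^ (1 / 2 : ℂ)) atTop (𝓝 1) := by
    have : Tendsto (fun x : ℝ ↦ 1 + I / (a * b * x)) atTop (𝓝 1) := by
      simpa [← div_div] using (hdiv (I / (a * b))).const_add 1
    simpa using this.cpow tendsto_const_nhds one_mem_slitPlane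
  have hτ0 : (-I * (a / b : ℝ) : ℂ) ^ (1 / 2 : ℂ) ≠ 0 := by simp [cpow_eq_zero_iff, ha, hb]
  have hlim := ((tendsto_const_nhds (x := (1 : ℂ)).div hτ hτ0).mul hone).mul
    ((tendsto_thetaGaussSum (-b) a).comp hy)
  rw [one_div_neg_I_mul_cpow_half hab', inv_div, mul_one] at hlim
  refine tendsto_nhds_unique_of_eventuallyEq ((tendsto_thetaGaussSum a b).comp hx) hlim ?_
  filter_upwards [eventually_gt_atTop 0] with x hx
  exact thetaGaussSum_reciprocity ha hb hab hx

lemma quadraticGaussSum_one_left {N : ℕ} (hN : N ≠ 0) (hN2 : Even N) :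
    quadraticGaussSum 1 N = √N * cexp (π / 4 * I) := by
  simpa [quadraticGaussSum] using
    quadraticGaussSum_reciprocity one_ne_zero hN (by simpa using hN2)

lemma periodic_exp_sq_div {a : ℤ} {N : ℕ} (haN : Even (a * N)) :
    Function.Periodic (fun r : ℕ ↦ cexp (π * I * a * r ^ 2 / N)) N := by
  rcases eq_or_ne N 0 with rfl | hN
  · exact Function.periodic_with_period_zero _
  obtain ⟨j, hj⟩ := even_iff_exists_two_mul.mp haN
  have hj' : (a * N : ℂ) = 2 * j := by exact_mod_cast hj
  intro r
  refine Complex.exp_eq_exp_iff_exists_int.mpr ⟨a * r + j, ?_⟩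
  push_cast
  field_simp
  linear_combination (N : ℂ) * hj'

lemma sum_neg_one_pow_mul_exp {m : ℕ} (hm : m ≠ 0) :
    ∑ n ∈ range (2 * m), (-1 : ℂ) ^ n * cexp (π * I * n ^ 2 / (2 * m)) =
      √(2 * m) * cexp (π * (1 - 2 * m) / 4 * I) := by
  have hm' : (m : ℂ) ≠ 0 := by exact_mod_cast hm
  -- Completing the square: `n ^ 2 + 2 * m * n = (n + m) ^ 2 - m ^ 2`.
  have hterm (n : ℕ) : (-1 : ℂ) ^ n * cexp (π * I * n ^ 2 / (2 * m)) =
      cexp (-(π * m / 2 * I)) * cexp (π * I * (1 : ℤ) * (n + m : ℕ) ^ 2 / (2 * m : ℕ)) := by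
    rw [← exp_pi_mul_I, ← Complex.exp_nat_mul, ← Complex.exp_add, ← Complex.exp_add]
    congr 1
    push_cast
    field_simp
    ring
  have hgauss := quadraticGaussSum_one_left (N := 2 * m) (by simpa) (even_two_mul m)
  rw [quadraticGaussSum, ← sum_range_add_eq_sum_range_of_periodic
    (periodic_exp_sq_div (by simp)) m] at hgauss
  simp only [hterm, ← mul_sum]
  rw [hgauss, mul_left_comm, ← Complex.exp_add]
  push_cast
  ring_nf

lemma sum_neg_one_pow_mul_sin {m : ℕ} (hm : m ≠ 0) :
    ∑ n ∈ range (2 * m), (-1 : ℝ) ^ n * Real.sin (π * n ^ 2 / (2 * m)) =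
      √(2 * m) * Real.sin (π * (1 - 2 * m) / 4) := by
  have him := congrArg im (sum_neg_one_pow_mul_exp hm)
  rw [im_ofReal_mul, im_sum] at him
  convert him using 2 with n
  · rw [show (π * I * n ^ 2 / (2 * m) : ℂ) = (π * n ^ 2 / (2 * m) : ℝ) * I by push_cast; ring,
      show (-1 : ℂ) ^ n = ((-1 : ℝ) ^ n : ℝ) by push_cast; rfl, im_ofReal_mul, exp_ofReal_mul_I_im]
  · rw [← exp_ofReal_mul_I_im]; push_cast; rfl

end GaussSums

lemma periodic_neg_one_pow_mul_sin (m : ℕ) :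
    Function.Periodic (fun n : ℕ ↦ (-1 : ℝ) ^ n * sin (π * n ^ 2 / (2 * m))) (2 * m) := by
  rcases eq_or_ne m 0 with rfl | hm
  · exact Function.periodic_with_period_zero _
  intro n
  have harg : π * (n + 2 * m : ℕ) ^ 2 / (2 * m) =
      π * n ^ 2 / (2 * m) + (n + m : ℕ) * (2 * π) := by
    push_cast; field_simp; ring
  simp only [harg, sin_add_nat_mul_two_pi, pow_add, (even_two_mul m).neg_one_pow, mul_one]

theorem extended_alternating_sine_sum_odd_general {m : ℕ} (hm : m ≠ 0) (p : ℕ) :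
    ∑ n ∈ Icc 1 (2 * p * m), (-1 : ℝ) ^ n * sin (π * n ^ 2 / (2 * m)) =
      p * (√(2 * m) * sin (π * (1 - 2 * m) / 4)) := by
  rw [mul_comm 2 p, mul_assoc, sum_Icc_one_mul_of_periodic (periodic_neg_one_pow_mul_sin m),
    sum_neg_one_pow_mul_sin hm, nsmul_eq_mul]

lemma sqrt_two_mul_mul_sin_odd (k : ℕ) :
    √(2 * (2 * k - 1)) * sin (π * (1 - 2 * (2 * k - 1)) / 4) = (-1) ^ k * √(2 * k - 1) := by
  have hangle : π * (1 - 2 * (2 * k - 1)) / 4 = π - π / 4 - k * π := by ring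
  rw [hangle, sin_sub_nat_mul_pi, sin_pi_sub, sin_pi_div_four, sqrt_mul zero_le_two]
  linear_combination (-1) ^ k * √(2 * k - 1) / 2 * mul_self_sqrt (zero_le_two (α := ℝ))

theorem extended_alternating_sine_sum_odd (k p : ℕ) (hk : 0 < k) (hp : 0 < p) :
    ∑ n ∈ Finset.Icc 1 (2 * p * (2 * k - 1)), (-1 : ℝ) ^ n *
        Real.sin (π * (n : ℝ) ^ 2 / (2 * (2 * (k : ℝ) - 1))) =
      (-1 : ℝ) ^ k * (p : ℝ) * Real.sqrt (2 * (k : ℝ) - 1) := by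
  have hcast : ((2 * k - 1 : ℕ) : ℝ) = 2 * k - 1 := by
    rw [Nat.cast_sub (by omega)]; push_cast; rfl
  have hsum := extended_alternating_sine_sum_odd_general (m := 2 * k - 1) (by omega) p
  rw [hcast, sqrt_two_mul_mul_sin_odd] at hsum
  rw [hsum]
  ring
end
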